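/- For a homogeneous polynomial a_m of degree m in variables s_1,...,s_n with norm ‖a_m‖ = max_{|s|=1} |a_m(s)|, one has ‖∂_i a_m‖ ≤ m ‖a_m‖ for each i, and for any operator p(s,D) = Σ p_{ijk} s_i ∂_j ∂_k, the polynomial p(s,D)a_m is homogeneous of degree m − 1 and satisfies ‖p(s,D) a_m‖ ≤ (m!/(m−2)!) ‖p‖ ‖a_m‖, where ‖p‖ = Σ |p_{ijk}|. -/

import Mathlib

/-!
Everything rests on the sharp Markov-type inequality `‖∂ᵢ f‖ ≤ d ‖f‖` for a form `f` of degree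
`d ≥ 1`; the bound on `p(s,D) a` is two applications of it, in degrees `m` and `m - 1`, together
with `|sᵢ| ≤ 1` and `m! / (m - 2)! = m (m - 1)`.

For the inequality, fix a unit vector `s` and write the direction of differentiation as
`e = cos γ • s + sin γ • t` with `t ⟂ s`. In the plane of `s` and `t` put `A = (s - i t) / 2`,
`B = (s + i t) / 2`, and let `F(w) = f(w A + B)`, a complex polynomial of degree at most `d`. By
homogeneity, `|F(z²)| = |f(z A + z⁻¹ B)| = |f(Re z • s + Im z • t)|` for `|z| = 1`, so `|F| ≤ ‖f‖`
on the unit circle. The chain rule and Euler's identity give, with `z = e^{iγ}` and `c = z²`,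
`z ∂ₑ f(s) = d F(1) + (c - 1) F'(1)`. So it suffices to prove the Bernstein–Szegő inequality
`|d F(1) + (c - 1) F'(1)| ≤ d max_{|w| = 1} |F(w)|` for `|c| = 1` (`Kellogg.bernstein_szego`).

This in turn follows from an exact quadrature formula with a nonnegative kernel: summing over the
`d` roots of `w ^ d = c`,
`∑ |1 + w + ⋯ + w ^ (d - 1)|² F(w) = d (d F(1) + (c - 1) F'(1))`,
where the total mass of the weights is `d²`. It is checked on monomials in
`Kellogg.fejer_moment`, using orthogonality of the powers on the nodes.
-/

open MvPolynomial

namespace Kellogg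
open ComplexConjugate

/-- Orthogonality of the powers `w ^ r`, `r < m`, on the `m` nodes `w₀ * ω ^ k`. -/
theorem node_orth {m : ℕ} {ω w₀ : ℂ} (hω : IsPrimitiveRoot ω m)
    (hω1 : ‖ω‖ = 1) (hw : ‖w₀‖ = 1) {r l : ℕ} (hr : r < m) (hl : l < m) :
    ∑ k ∈ Finset.range m, (w₀ * ω ^ k) ^ r * conj (w₀ * ω ^ k) ^ l =
      if r = l then (m : ℂ) else 0 := by
  have key : ∀ w : ℂ, ‖w‖ = 1 → ∀ a d : ℕ, w ^ (a + d) * conj w ^ a = w ^ d := by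
    intro w hw a d
    have h : w * conj w = 1 := by rw [Complex.mul_conj']; simp [hw]
    rw [pow_add, mul_right_comm, ← mul_pow, h, one_pow, one_mul]
  have hz : ∀ d : ℕ, 0 < d → d < m → ∑ k ∈ Finset.range m, (w₀ * ω ^ k) ^ d = 0 := by
    intro d hd hdm
    have h1 : ω ^ d ≠ 1 := hω.pow_ne_one_of_pos_of_lt hd.ne' hdm
    have h2 : ∑ k ∈ Finset.range m, (ω ^ d) ^ k = 0 := by
      rw [geom_sum_eq h1, ← pow_mul, mul_comm, pow_mul, hω.pow_eq_one]; simp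
    simp_rw [mul_pow, ← Finset.mul_sum, pow_right_comm ω _ d, h2, mul_zero]
  have hn : ∀ k, ‖w₀ * ω ^ k‖ = 1 := by intro k; simp [hw, hω1]
  rcases lt_trichotomy r l with h | h | h
  · obtain ⟨d, rfl⟩ := Nat.exists_eq_add_of_lt h
    rw [if_neg (by omega)]
    have := congrArg conj (hz (d + 1) (by omega) (by omega))
    rw [map_sum, map_zero] at this
    rw [← this]
    refine Finset.sum_congr rfl fun k _ => ?_
    have := congrArg conj (key _ (hn k) r (d + 1))
    rw [← this, add_assoc]
    simp only [map_mul, map_pow, Complex.conj_conj]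
    ring
  · subst h
    have : ∀ k ∈ Finset.range m, (w₀ * ω ^ k) ^ r * conj (w₀ * ω ^ k) ^ r = 1 := by
      intro k _; simpa using key _ (hn k) r 0
    rw [Finset.sum_congr rfl this]; simp
  · obtain ⟨d, rfl⟩ := Nat.exists_eq_add_of_lt h
    rw [if_neg (by omega), ← hz (d + 1) (by omega) (by omega)]
    exact Finset.sum_congr rfl fun k _ => key _ (hn k) l (d + 1)

/-- Moments of the Fejér weights `|1 + w + ⋯ + w ^ (m - 1)|²` on the roots of `w ^ m = c`. -/
theorem fejer_moment {m : ℕ} {ω w₀ c : ℂ} (hω : IsPrimitiveRoot ω m)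
    (hω1 : ‖ω‖ = 1) (hw : ‖w₀‖ = 1) (hc : w₀ ^ m = c) {r : ℕ} (hr : r ≤ m) :
    ∑ k ∈ Finset.range m, (w₀ * ω ^ k) ^ r *
      ((∑ j ∈ Finset.range m, (w₀ * ω ^ k) ^ j) *
        conj (∑ j ∈ Finset.range m, (w₀ * ω ^ k) ^ j)) = m * (m + (c - 1) * r) := by
  have hB : ∀ r < m, ∑ k ∈ Finset.range m, (w₀ * ω ^ k) ^ r *
        conj (∑ j ∈ Finset.range m, (w₀ * ω ^ k) ^ j) = m := by
    intro r hr
    simp_rw [map_sum, Finset.mul_sum]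
    rw [Finset.sum_comm]
    simp_rw [map_pow]
    rw [Finset.sum_congr rfl fun l hl => node_orth hω hω1 hw hr (Finset.mem_range.1 hl)]
    simp [hr]
  induction r with
  | zero =>
    simp_rw [pow_zero, one_mul, Finset.sum_mul]
    rw [Finset.sum_comm, Finset.sum_congr rfl fun j hj => hB j (Finset.mem_range.1 hj)]
    simp
  | succ r ih =>
    -- `w S(w) = S(w) + (w ^ m - 1)` for `S(w) = ∑_{j < m} w ^ j`, and `w ^ m = c` at each node.
    have hS : ∀ k, (w₀ * ω ^ k) * (∑ j ∈ Finset.range m, (w₀ * ω ^ k) ^ j) =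
        (∑ j ∈ Finset.range m, (w₀ * ω ^ k) ^ j) + (c - 1) := by
      intro k
      have h1 := mul_geom_sum (w₀ * ω ^ k) m
      have h2 : (w₀ * ω ^ k) ^ m = c := by
        rw [mul_pow, hc, pow_right_comm, hω.pow_eq_one]; simp
      rw [h2] at h1
      linear_combination h1
    have h : ∀ k ∈ Finset.range m, (w₀ * ω ^ k) ^ (r + 1) *
      ((∑ j ∈ Finset.range m, (w₀ * ω ^ k) ^ j) *
        conj (∑ j ∈ Finset.range m, (w₀ * ω ^ k) ^ j)) =
        (w₀ * ω ^ k) ^ r *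
      ((∑ j ∈ Finset.range m, (w₀ * ω ^ k) ^ j) *
        conj (∑ j ∈ Finset.range m, (w₀ * ω ^ k) ^ j)) +
        (c - 1) * ((w₀ * ω ^ k) ^ r * conj (∑ j ∈ Finset.range m, (w₀ * ω ^ k) ^ j)) := by
      intro k _
      linear_combination ((w₀ * ω ^ k) ^ r *
        conj (∑ j ∈ Finset.range m, (w₀ * ω ^ k) ^ j)) * hS k
    rw [Finset.sum_congr rfl h, Finset.sum_add_distrib, ← Finset.mul_sum, ih (by omega),
      hB r (by omega)]
    push_cast; ring

/-- A form of the Bernstein–Szegő inequality: with `c = e ^ (2 i γ)` the left-hand side is, for the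
trigonometric polynomial `T θ = e ^ (- i m θ) * P (e ^ (2 i θ))`, the modulus of
`m * cos γ * T 0 + sin γ * T' 0`. -/
theorem bernstein_szego {m : ℕ} (hm : 0 < m) {P : Polynomial ℂ} (hP : P.natDegree ≤ m)
    {K : ℝ} (hK : ∀ w : ℂ, ‖w‖ = 1 → ‖P.eval w‖ ≤ K) {c : ℂ} (hc : ‖c‖ = 1) :
    ‖m * P.eval 1 + (c - 1) * P.derivative.eval 1‖ ≤ m * K := by
  obtain ⟨w₀, hw0⟩ := IsAlgClosed.exists_pow_nat_eq c hm
  have hw : ‖w₀‖ = 1 := by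
    rw [← pow_eq_one_iff_of_nonneg (norm_nonneg _) hm.ne', ← norm_pow, hw0, hc]
  obtain ⟨ω, hω⟩ : ∃ ω : ℂ, IsPrimitiveRoot ω m := ⟨_, Complex.isPrimitiveRoot_exp m hm.ne'⟩
  have hω1 : ‖ω‖ = 1 := hω.norm'_eq_one hm.ne'
  set S : ℕ → ℂ := fun k => ∑ j ∈ Finset.range m, (w₀ * ω ^ k) ^ j with hS
  have hmC : (m : ℂ) ≠ 0 := by exact_mod_cast hm.ne'
  have hmR : (0 : ℝ) < m := by exact_mod_cast hm
  have hrep : ∑ k ∈ Finset.range m, P.eval (w₀ * ω ^ k) * (S k * conj (S k)) =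
      m * (m * P.eval 1 + (c - 1) * P.derivative.eval 1) := by
    have hd : P.derivative.eval 1 = ∑ r ∈ Finset.range (m + 1), P.coeff r * r := by
      rw [Polynomial.derivative_eval, Polynomial.sum_over_range' _ (by simp) (m+1) (by omega)]
      simp
    simp_rw [hd, Polynomial.eval_eq_sum_range' (Nat.lt_succ_of_le hP), Finset.sum_mul,
      one_pow, mul_one]
    rw [Finset.sum_comm, Finset.mul_sum, Finset.mul_sum, ← Finset.sum_add_distrib, Finset.mul_sum]
    refine Finset.sum_congr rfl fun r hr => ?_
    simp_rw [mul_assoc (P.coeff r)]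
    rw [← Finset.mul_sum, fejer_moment hω hω1 hw hw0 (by simpa [Nat.lt_succ_iff] using hr)]
    ring
  have hmass : ∑ k ∈ Finset.range m, ‖S k‖ ^ 2 = (m : ℝ) * m := by
    have h := fejer_moment hω hω1 hw hw0 (Nat.zero_le m)
    simp only [pow_zero, one_mul, Complex.mul_conj'] at h
    simp only [Nat.cast_zero, mul_zero, add_zero] at h
    exact_mod_cast h
  have h1 : (m : ℝ) * ‖m * P.eval 1 + (c - 1) * P.derivative.eval 1‖ ≤ m * (m * K) := by
    calc (m : ℝ) * ‖m * P.eval 1 + (c - 1) * P.derivative.eval 1‖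
        = ‖∑ k ∈ Finset.range m, P.eval (w₀ * ω ^ k) * (S k * conj (S k))‖ := by
          rw [hrep, norm_mul, Complex.norm_natCast]
      _ ≤ ∑ k ∈ Finset.range m, K * ‖S k‖ ^ 2 := by
          refine norm_sum_le_of_le _ fun k _ => ?_
          rw [norm_mul, norm_mul, RCLike.norm_conj, ← sq]
          exact mul_le_mul_of_nonneg_right (hK _ (by simp [hw, hω1])) (by positivity)
      _ = m * (m * K) := by rw [← Finset.mul_sum, hmass]; ring
  exact le_of_mul_le_mul_left h1 hmR

theorem eval_smul_of_homogeneous {R : Type*} [CommSemiring R] {n m : ℕ}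
    {f : MvPolynomial (Fin n) R} (hf : f.IsHomogeneous m) (c : R) (x : Fin n → R) :
    eval (fun i => c * x i) f = c ^ m * eval x f := by
  rw [eval_eq', eval_eq', Finset.mul_sum]
  refine Finset.sum_congr rfl fun d hd => ?_
  have h := hf.degree_eq_sum_deg_support hd
  rw [← Finsupp.degree_apply, Finsupp.degree_eq_sum] at h
  simp_rw [mul_pow]
  rw [Finset.prod_mul_distrib, Finset.prod_pow_eq_pow_sum, h]
  ring

theorem derivative_aeval_chain {n : ℕ} (f : MvPolynomial (Fin n) ℂ) (L : Fin n → Polynomial ℂ) :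
    Polynomial.derivative (aeval L f) =
      ∑ i, Polynomial.derivative (L i) * aeval L (pderiv i f) := by
  induction f using MvPolynomial.induction_on with
  | C a => simp
  | add p q hp hq => simp only [map_add, hp, hq, mul_add, Finset.sum_add_distrib]
  | mul_X p j hp =>
    have h : ∀ i, Polynomial.derivative (L i) * aeval L (pderiv i (p * X j)) =
        (Polynomial.derivative (L i) * aeval L (pderiv i p)) * L j +
          if i = j then aeval L p * Polynomial.derivative (L j) else 0 := by
      intro i
      rw [pderiv_mul, map_add, map_mul, map_mul, aeval_X]
      split_ifs with hij
      · subst hij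
        rw [pderiv_X_self, map_one]; ring
      · rw [pderiv_X_of_ne (Ne.symm hij), map_zero]; ring
    rw [map_mul, aeval_X, Polynomial.derivative_mul, hp, Finset.sum_congr rfl fun i _ => h i,
      Finset.sum_add_distrib, Finset.sum_mul, Finset.sum_ite_eq' Finset.univ j,
      if_pos (Finset.mem_univ j)]

theorem eval_aeval {n : ℕ} (f : MvPolynomial (Fin n) ℂ) (L : Fin n → Polynomial ℂ) (w : ℂ) :
    (aeval L f).eval w = eval (fun i => (L i).eval w) f := by
  induction f using MvPolynomial.induction_on with
  | C a => simp
  | add p q hp hq => simp [hp, hq]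
  | mul_X p j hp => simp [hp]

/-- The sharp bound for the derivative at `s` in the direction `z.re • s + z.im • t`, given a bound
on the ellipse `{x • s + y • t | x² + y² = 1}`. -/
theorem plane_bound {n m : ℕ} (hm : 0 < m) {f : MvPolynomial (Fin n) ℝ} (hf : f.IsHomogeneous m)
    {K : ℝ} (s t : Fin n → ℝ)
    (hK : ∀ z : ℂ, ‖z‖ = 1 → |eval (fun i => z.re * s i + z.im * t i) f| ≤ K)
    {z : ℂ} (hz : ‖z‖ = 1) :
    |∑ i, (z.re * s i + z.im * t i) * eval s (pderiv i f)| ≤ m * K := by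
  set g : MvPolynomial (Fin n) ℂ := map Complex.ofRealHom f with hg
  have hgh : g.IsHomogeneous m := hf.map _
  have hcast : ∀ (x : Fin n → ℝ) (q : MvPolynomial (Fin n) ℝ),
      eval (fun i => (x i : ℂ)) (map Complex.ofRealHom q) = (eval x q : ℂ) := by
    intro x q
    rw [eval_map]
    exact (eval₂_comp Complex.ofRealHom x q).symm
  set A : Fin n → ℂ := fun i => (s i - Complex.I * t i) / 2 with hA
  set B : Fin n → ℂ := fun i => (s i + Complex.I * t i) / 2 with hB
  set L : Fin n → Polynomial ℂ :=
    fun i => Polynomial.C (A i) * Polynomial.X + Polynomial.C (B i) with hL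
  have hLw : ∀ w i, (L i).eval w = A i * w + B i := by intro w i; simp [hL]
  have hL1 : (fun i => (L i).eval 1) = fun i => (s i : ℂ) := by
    funext i; rw [hLw]; simp only [hA, hB]; ring
  -- On the unit circle `z ^ 2 * A + B = z * (z.re * s + z.im * t)`.
  have hpt : ∀ z : ℂ, ‖z‖ = 1 → ∀ i,
      A i * z ^ 2 + B i = z * ((z.re * s i + z.im * t i : ℝ) : ℂ) := by
    intro z hz i
    have h1 : (z.re : ℂ) ^ 2 + (z.im : ℂ) ^ 2 = 1 := by
      have : z.re ^ 2 + z.im ^ 2 = 1 := by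
        have := Complex.sq_norm z
        rw [hz, Complex.normSq_apply] at this; linarith
      exact_mod_cast this
    have h2 : z = z.re + z.im * Complex.I := (Complex.re_add_im z).symm
    have hI : Complex.I ^ 2 = -1 := Complex.I_sq
    push_cast
    simp only [hA, hB]
    generalize (z.re : ℂ) = x at *
    generalize (z.im : ℂ) = y at *
    subst h2
    linear_combination (-(s i + Complex.I * t i) / 2) * h1 +
      ((s i - Complex.I * t i) / 2 * y ^ 2 - x * y * t i) * hI
  have hdeg : (aeval L g).natDegree ≤ m := by
    have := aeval_natDegree_le g hgh.totalDegree_le L (n := 1)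
      (fun i => Polynomial.natDegree_linear_le)
    simpa using this
  have hbd : ∀ w : ℂ, ‖w‖ = 1 → ‖(aeval L g).eval w‖ ≤ K := by
    intro w hw
    obtain ⟨y, rfl⟩ := IsAlgClosed.exists_pow_nat_eq w (n := 2) (by norm_num)
    have hy : ‖y‖ = 1 := by
      rwa [norm_pow, pow_eq_one_iff_of_nonneg (norm_nonneg _) (by norm_num)] at hw
    rw [eval_aeval]
    simp_rw [hLw, hpt y hy]
    rw [eval_smul_of_homogeneous hgh, hcast, norm_mul, norm_pow, hy, one_pow, one_mul,
      Complex.norm_real]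
    exact hK y hy
  have hmain := bernstein_szego hm hdeg hbd (c := z ^ 2) (by rw [norm_pow, hz, one_pow])
  have hD : (aeval L g).derivative.eval 1 = ∑ i, A i * (eval s (pderiv i f) : ℂ) := by
    rw [derivative_aeval_chain, Polynomial.eval_finsetSum]
    refine Finset.sum_congr rfl fun i _ => ?_
    rw [Polynomial.eval_mul, eval_aeval, hL1, hg, pderiv_map, hcast]
    simp [hL]
  have hE : (m : ℂ) * (aeval L g).eval 1 = ∑ i, (s i : ℂ) * (eval s (pderiv i f) : ℂ) := by
    have h := congrArg (eval s) hf.sum_X_mul_pderiv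
    rw [eval_aeval, hL1, hcast]
    simp only [map_sum, map_mul, eval_X, nsmul_eq_mul, map_natCast] at h
    exact_mod_cast h.symm
  -- The direction `e = z.re • s + z.im • t` satisfies `z • e = z² • A + B = (z² - 1) • A + s`.
  have hfin : (m : ℂ) * (aeval L g).eval 1 + (z ^ 2 - 1) * (aeval L g).derivative.eval 1 =
      z * ((∑ i, (z.re * s i + z.im * t i) * eval s (pderiv i f) : ℝ) : ℂ) := by
    rw [hD, hE, Finset.mul_sum, ← Finset.sum_add_distrib, Complex.ofReal_sum, Finset.mul_sum]
    refine Finset.sum_congr rfl fun i _ => ?_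
    have hAB : A i + B i = s i := by simp only [hA, hB]; ring
    rw [Complex.ofReal_mul]
    linear_combination (eval s (pderiv i f) : ℂ) * (hpt z hz i - hAB)
  rwa [hfin, norm_mul, hz, one_mul, Complex.norm_real] at hmain

/-- The Markov-type inequality on the unit sphere, for a form bounded by `K` on the unit ball. The
`i`-th basis vector is split into its component along `s` and a multiple `β • t` of a vector `t`
orthogonal to `s`. The ball is used because `t` may vanish (when `s` is itself `±` that basis
vector, in particular for `n = 1`), so that the ellipse through `s` and `t` can leave the sphere. -/
theorem markov_ball {n m : ℕ} (hm : 0 < m) {f : MvPolynomial (Fin n) ℝ} (hf : f.IsHomogeneous m)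
    {K : ℝ} (hK : ∀ x : Fin n → ℝ, ∑ i, x i ^ 2 ≤ 1 → |eval x f| ≤ K)
    {s : Fin n → ℝ} (hs : ∑ i, s i ^ 2 = 1) (i : Fin n) :
    |eval s (pderiv i f)| ≤ m * K := by
  have hsi : s i ^ 2 ≤ 1 := by
    rw [← hs]; exact Finset.single_le_sum (fun j _ => sq_nonneg (s j)) (Finset.mem_univ i)
  set β := Real.sqrt (1 - s i ^ 2) with hβ
  have hβ2 : β ^ 2 = 1 - s i ^ 2 := Real.sq_sqrt (by linarith)
  set e : Fin n → ℝ := Pi.single i 1 with he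
  have hee : ∑ j, e j ^ 2 = 1 := by
    rw [Finset.sum_eq_single i] <;> simp +contextual [he]
  have hse : ∑ j, s j * e j = s i := by simp [he, Pi.single_apply]
  set v : Fin n → ℝ := fun j => e j - s i * s j with hv
  have hvv : ∑ j, v j ^ 2 = β ^ 2 := by
    have : ∀ j, v j ^ 2 = e j ^ 2 - 2 * s i * (s j * e j) + s i ^ 2 * s j ^ 2 := by
      intro j; simp only [hv]; ring
    simp_rw [this]
    rw [Finset.sum_add_distrib, Finset.sum_sub_distrib, ← Finset.mul_sum, ← Finset.mul_sum, hee,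
      hse, hs, hβ2]
    ring
  have hsv : ∑ j, s j * v j = 0 := by
    have : ∀ j, s j * v j = s j * e j - s i * s j ^ 2 := by intro j; simp only [hv]; ring
    simp_rw [this]
    rw [Finset.sum_sub_distrib, ← Finset.mul_sum, hse, hs]; ring
  -- If `β = 0` then `v = 0`, and the junk value `v / 0 = 0` is the desired one.
  have hβv : ∀ j, β * (v j / β) = v j := by
    intro j
    by_cases h : β = 0
    · rw [h, zero_pow two_ne_zero, Finset.sum_eq_zero_iff_of_nonneg fun j _ => sq_nonneg _] at hvv
      have := hvv j (Finset.mem_univ j)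
      rw [h, zero_mul]; exact (pow_eq_zero_iff two_ne_zero).1 this |>.symm
    · field_simp
  have htt : ∑ j, (v j / β) ^ 2 ≤ 1 := by
    simp_rw [div_pow]
    rw [← Finset.sum_div, hvv]; exact div_self_le_one _
  have hst : ∑ j, s j * (v j / β) = 0 := by
    simp_rw [← mul_div_assoc]
    rw [← Finset.sum_div, hsv, zero_div]
  have hunit : ∀ z : ℂ, ‖z‖ = 1 → z.re ^ 2 + z.im ^ 2 = 1 := by
    intro z hz
    have := Complex.sq_norm z
    rw [hz, Complex.normSq_apply] at this; linarith
  have hz : ‖(⟨s i, β⟩ : ℂ)‖ = 1 := by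
    rw [← pow_eq_one_iff_of_nonneg (norm_nonneg _) two_ne_zero, Complex.sq_norm,
      Complex.normSq_apply]
    simp only; linarith
  have h := plane_bound hm hf s (fun j => v j / β) (K := K) (fun z hz => hK _ ?_) hz
  · have h2 : ∀ j, s i * s j + β * (v j / β) = e j := by
      intro j; rw [hβv]; simp only [hv]; ring
    simp only [h2] at h
    simpa [he, Pi.single_apply] using h
  · have : ∀ j, (z.re * s j + z.im * (v j / β)) ^ 2 =
        z.re ^ 2 * s j ^ 2 + 2 * z.re * z.im * (s j * (v j / β)) + z.im ^ 2 * (v j / β) ^ 2 := by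
      intro j; ring
    simp_rw [this]
    rw [Finset.sum_add_distrib, Finset.sum_add_distrib, ← Finset.mul_sum, ← Finset.mul_sum,
      ← Finset.mul_sum, hs, hst]
    nlinarith [hunit z hz, sq_nonneg z.im]

theorem ball_bound {n m : ℕ} (hm : 0 < m) {f : MvPolynomial (Fin n) ℝ} (hf : f.IsHomogeneous m)
    {K : ℝ} (hK0 : 0 ≤ K) (hK : ∀ x : Fin n → ℝ, ∑ i, x i ^ 2 = 1 → |eval x f| ≤ K)
    {x : Fin n → ℝ} (hx : ∑ i, x i ^ 2 ≤ 1) : |eval x f| ≤ K := by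
  set r := Real.sqrt (∑ i, x i ^ 2) with hr
  have hnn : 0 ≤ ∑ i, x i ^ 2 := Finset.sum_nonneg fun i _ => sq_nonneg _
  have hr2 : r ^ 2 = ∑ i, x i ^ 2 := Real.sq_sqrt hnn
  have hr1 : r ≤ 1 := Real.sqrt_le_one.2 hx
  have hr0 : 0 ≤ r := Real.sqrt_nonneg _
  have hxr : x = fun i => r * (x i / r) := by
    funext i
    by_cases h : r = 0
    · rw [h, zero_pow two_ne_zero, eq_comm,
        Finset.sum_eq_zero_iff_of_nonneg fun j _ => sq_nonneg _] at hr2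
      rw [h, zero_mul]; exact (pow_eq_zero_iff two_ne_zero).1 (hr2 i (Finset.mem_univ i))
    · field_simp
  rw [hxr, eval_smul_of_homogeneous hf, abs_mul, abs_of_nonneg (pow_nonneg hr0 m)]
  rcases eq_or_ne r 0 with h | h
  · rw [h, zero_pow hm.ne', zero_mul]; exact hK0
  · have h1 : ∑ i, (x i / r) ^ 2 = 1 := by
      simp_rw [div_pow]
      rw [← Finset.sum_div, ← hr2]; exact div_self (pow_ne_zero 2 h)
    calc r ^ m * |eval (fun i => x i / r) f| ≤ 1 * K :=
          mul_le_mul (pow_le_one₀ hr0 hr1) (hK _ h1) (abs_nonneg _) zero_le_one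
      _ = K := one_mul K

theorem bddAbove_sphere {n : ℕ} (f : MvPolynomial (Fin n) ℝ) :
    BddAbove ((fun s : Fin n → ℝ => |eval s f|) '' {s : Fin n → ℝ | ∑ i, (s i) ^ 2 = 1}) := by
  have hcl : IsClosed {s : Fin n → ℝ | ∑ i, (s i) ^ 2 = 1} :=
    isClosed_eq (by fun_prop) continuous_const
  have hsub : {s : Fin n → ℝ | ∑ i, (s i) ^ 2 = 1} ⊆ Set.Icc (fun _ => -1) (fun _ => 1) := by
    intro s hs
    have h : ∀ i, |s i| ≤ 1 := by
      intro i
      rw [← sq_le_one_iff_abs_le_one, ← show ∑ i, (s i) ^ 2 = 1 from hs]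
      exact Finset.single_le_sum (fun j _ => sq_nonneg (s j)) (Finset.mem_univ i)
    exact ⟨fun i => (abs_le.1 (h i)).1, fun i => (abs_le.1 (h i)).2⟩
  exact ((isCompact_Icc.of_isClosed_subset hcl hsub).image
    (MvPolynomial.continuous_eval f).abs).bddAbove

end Kellogg

open Kellogg in
/-- For a homogeneous polynomial `a` of degree `m ≥ 2` in `n` variables, with
`‖a‖ = max_{|s|=1} |a(s)|`, one has `‖∂ᵢ a‖ ≤ m ‖a‖`, and for
`p(s,D) = Σ p_{ijk} sᵢ ∂ⱼ ∂ₖ` the polynomial `p(s,D) a` is homogeneous of degree `m - 1`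
with `‖p(s,D) a‖ ≤ (m!/(m-2)!) ‖p‖ ‖a‖`, where `‖p‖ = Σ |p_{ijk}|`. -/
theorem stmt13 (n m : ℕ) (hm : 2 ≤ m)
    (N : MvPolynomial (Fin n) ℝ → ℝ)
    (hN : ∀ f : MvPolynomial (Fin n) ℝ,
      N f = sSup ((fun s : Fin n → ℝ => |MvPolynomial.eval s f|) ''
        {s : Fin n → ℝ | ∑ i, (s i) ^ 2 = 1}))
    (a : MvPolynomial (Fin n) ℝ) (ha : a.IsHomogeneous m)
    (p : Fin n → Fin n → Fin n → ℝ) :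
    (∀ i : Fin n, N (pderiv i a) ≤ (m : ℝ) * N a) ∧
    (∑ i, ∑ j, ∑ k, C (p i j k) * X i * pderiv j (pderiv k a)).IsHomogeneous (m - 1) ∧
    N (∑ i, ∑ j, ∑ k, C (p i j k) * X i * pderiv j (pderiv k a)) ≤
      ((m.factorial : ℝ) / ((m - 2).factorial : ℝ)) * (∑ i, ∑ j, ∑ k, |p i j k|) * N a := by
  have hN0 : ∀ f, 0 ≤ N f := by
    intro f; rw [hN]
    refine Real.sSup_nonneg ?_
    rintro _ ⟨s, _, rfl⟩; exact abs_nonneg _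
  have hNle : ∀ f (s : Fin n → ℝ), ∑ i, s i ^ 2 = 1 → |eval s f| ≤ N f := by
    intro f s hs; rw [hN]; exact le_csSup (bddAbove_sphere f) ⟨s, hs, rfl⟩
  have hleN : ∀ f (K : ℝ), 0 ≤ K → (∀ s : Fin n → ℝ, ∑ i, s i ^ 2 = 1 → |eval s f| ≤ K) →
      N f ≤ K := by
    intro f K hK h; rw [hN]
    refine Real.sSup_le ?_ hK
    rintro _ ⟨s, hs, rfl⟩; exact h s hs
  have hder : ∀ (d : ℕ) (f : MvPolynomial (Fin n) ℝ), 0 < d → f.IsHomogeneous d → ∀ i,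
      N (pderiv i f) ≤ d * N f := by
    intro d f hd hf i
    exact hleN _ _ (mul_nonneg d.cast_nonneg (hN0 f)) fun s hs =>
      markov_ball hd hf (fun x hx => ball_bound hd hf (hN0 f) (hNle f) hx) hs i
  have hfac : (m.factorial : ℝ) / ((m - 2).factorial : ℝ) = ((m - 1 : ℕ) : ℝ) * m := by
    obtain ⟨k, rfl⟩ := Nat.exists_eq_add_of_le' hm
    have : (k.factorial : ℝ) ≠ 0 := by exact_mod_cast k.factorial_ne_zero
    rw [Nat.add_sub_cancel, div_eq_iff this, show k + 2 - 1 = k + 1 from rfl,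
      show k + 2 = (k + 1) + 1 from rfl, Nat.factorial_succ, Nat.factorial_succ]
    push_cast; ring
  refine ⟨hder m a (by omega) ha, ?_, ?_⟩
  · refine IsHomogeneous.sum _ _ _ fun i _ => IsHomogeneous.sum _ _ _ fun j _ =>
      IsHomogeneous.sum _ _ _ fun k _ => ?_
    have h := (isHomogeneous_C_mul_X (p i j k) i).mul
      ((ha.pderiv (i := k)).pderiv (i := j))
    rwa [show 1 + (m - 1 - 1) = m - 1 by omega] at h
  · rw [hfac]
    have hP : 0 ≤ ∑ i, ∑ j, ∑ k, |p i j k| := Finset.sum_nonneg fun i _ =>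
      Finset.sum_nonneg fun j _ => Finset.sum_nonneg fun k _ => abs_nonneg _
    refine hleN _ _ (by have := hN0 a; positivity) fun s hs => ?_
    have hterm : ∀ i j k, |eval s (C (p i j k) * X i * pderiv j (pderiv k a))| ≤
        |p i j k| * (((m - 1 : ℕ) : ℝ) * m * N a) := by
      intro i j k
      have h1 : |s i| ≤ 1 := by
        rw [← sq_le_one_iff_abs_le_one, ← hs]
        exact Finset.single_le_sum (fun j _ => sq_nonneg (s j)) (Finset.mem_univ i)
      have h2 : |eval s (pderiv j (pderiv k a))| ≤ ((m - 1 : ℕ) : ℝ) * m * N a :=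
        calc |eval s (pderiv j (pderiv k a))| ≤ N (pderiv j (pderiv k a)) := hNle _ s hs
          _ ≤ ((m - 1 : ℕ) : ℝ) * N (pderiv k a) := hder _ _ (by omega) ha.pderiv j
          _ ≤ ((m - 1 : ℕ) : ℝ) * (m * N a) :=
            mul_le_mul_of_nonneg_left (hder m a (by omega) ha k) (Nat.cast_nonneg _)
          _ = _ := by ring
      rw [map_mul, map_mul, eval_C, eval_X, abs_mul, abs_mul, mul_assoc]
      refine mul_le_mul_of_nonneg_left ?_ (abs_nonneg _)
      calc |s i| * |eval s (pderiv j (pderiv k a))| ≤ 1 * (((m - 1 : ℕ) : ℝ) * m * N a) :=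
            mul_le_mul h1 h2 (abs_nonneg _) zero_le_one
        _ = _ := one_mul _
    rw [mul_right_comm, mul_comm]
    simp_rw [map_sum, Finset.sum_mul]
    refine (Finset.abs_sum_le_sum_abs _ _).trans (Finset.sum_le_sum fun i _ => ?_)
    refine (Finset.abs_sum_le_sum_abs _ _).trans (Finset.sum_le_sum fun j _ => ?_)
    exact (Finset.abs_sum_le_sum_abs _ _).trans (Finset.sum_le_sum fun k _ => hterm i j k)
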